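/- Let G be a finite connected simple graph with vertex set V of size γ ≥ 2 and δ edges, and g : V → ℕ with p_a := (∑_{v∈V} g(v)) + δ − γ + 1 ≥ 2. Let d : V → ℤ satisfy d(v) ≥ 1 for all v, set d = ∑_{v∈V} d(v), and assume d ≥ p_a − 1. Define w(v) = d(v)/d, λ(v) = 1 − g(v) − w(v)·(1 − p_a), Δ_w(O_B) = (∑_{v∈B} λ(v)) − N(B), and deg_B(ω) = ∑_{v∈B} (2g(v) − 2 + deg(v)). Suppose that for every nonempty proper subset B ⊆ V the balanced inequality |(∑_{v∈B} d(v)) − (d/(2p_a − 2))·deg_B(ω)| ≤ δ_B/2 holds. Then for every nonempty proper subset B ⊆ V one has 0 ≤ Δ_w(O_B) ≤ δ_B; and if moreover d > p_a − 1, then 0 < Δ_w(O_B) < δ_B for every nonempty proper B. -/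

import Mathlib

open Finset

/-- A depth-one datum on a graph `G` (encoding a depth one sheaf on a nodal curve with
dual graph `G`): ranks `r` on vertices (components), and at each edge (node) `e` the
free rank `s e` of the stalk and torsion parts `a v e` attached to each endpoint `v`
of `e`, subject to the compatibility `r v = s e + a v e` for `v` an endpoint of `e`.
For an edge `e` with chosen endpoints `u_e, v_e`, the paper's `a(e)`, `b(e)` are
`a u_e e` and `a v_e e`. -/
structure DepthOneDatum {V : Type*} (G : SimpleGraph V) where
  r : V → ℕ
  s : Sym2 V → ℕ
  a : V → Sym2 V → ℕ
  compat : ∀ e ∈ G.edgeSet, ∀ v ∈ e, r v = s e + a v e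

variable {V : Type*} [Fintype V] [DecidableEq V]

/-- The defect `Δ = (∑ v, r v · λ v) − ∑ e, s e` of a depth-one datum
(equal to `Δ_w(E) = wdeg E − ∑ deg E_i` for the corresponding sheaf). -/
def DepthOneDatum.defect {G : SimpleGraph V} [DecidableRel G.Adj]
    (lam : V → ℚ) (D : DepthOneDatum G) : ℚ :=
  (∑ v : V, (D.r v : ℚ) * lam v) - ∑ e ∈ G.edgeFinset, (D.s e : ℚ)

/-- The residual rank `t_e = a(e) + b(e)` of a depth-one datum at an edge `e`. -/
def DepthOneDatum.tRes {G : SimpleGraph V} (D : DepthOneDatum G) (e : Sym2 V) : ℚ :=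
  Sym2.lift ⟨fun x y => (D.a x e : ℚ) + (D.a y e : ℚ), fun _ _ => add_comm _ _⟩ e

/-- A depth-one datum is locally free when all torsion parts `a`, `b` vanish at all edges. -/
def DepthOneDatum.LocFree {G : SimpleGraph V} (D : DepthOneDatum G) : Prop :=
  ∀ e ∈ G.edgeSet, ∀ v ∈ e, D.a v e = 0

/-- `N(B)`: the number of edges of `G` with both endpoints in `B`. -/
def insideCount (G : SimpleGraph V) [DecidableRel G.Adj] (B : Finset V) : ℕ :=
  (G.edgeFinset.filter (fun e => e ∈ B.sym2)).card

/-- `δ_B`: the number of edges of `G` with exactly one endpoint in `B`. -/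
def crossCount (G : SimpleGraph V) [DecidableRel G.Adj] (B : Finset V) : ℕ :=
  (G.edgeFinset.filter (fun e => e ∉ B.sym2 ∧ e ∉ Bᶜ.sym2)).card

/-- `Δ_w(O_B) = (∑_{v ∈ B} λ v) − N(B)`. -/
def DeltaO (G : SimpleGraph V) [DecidableRel G.Adj] (lam : V → ℚ) (B : Finset V) : ℚ :=
  (∑ v ∈ B, lam v) - (insideCount G B : ℚ)

theorem aux_handshake (G : SimpleGraph V) [DecidableRel G.Adj] (B : Finset V) :
    (∑ v ∈ B, G.degree v) = 2 * insideCount G B + crossCount G B := by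
  have h1 : ∀ v, G.degree v = ∑ e ∈ G.edgeFinset, if v ∈ e then 1 else 0 := by
    intro v
    rw [← G.card_incidenceFinset_eq_degree, G.incidenceFinset_eq_filter, Finset.card_filter]
  simp_rw [h1]
  rw [Finset.sum_comm]
  unfold insideCount crossCount
  rw [Finset.card_filter, Finset.card_filter, Finset.mul_sum, ← Finset.sum_add_distrib]
  apply Finset.sum_congr rfl
  intro e he
  induction e using Sym2.ind with
  | _ a b =>
    have hab : a ≠ b := by
      have : G.Adj a b := by simpa using he
      exact this.ne
    have h2 : ∀ v, (if v ∈ s(a, b) then 1 else 0 : ℕ)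
        = (if v = a then 1 else 0) + (if v = b then 1 else 0) := by
      intro v
      by_cases h : v = a <;> by_cases h' : v = b <;> simp_all
    simp_rw [h2]
    rw [Finset.sum_add_distrib, Finset.sum_ite_eq', Finset.sum_ite_eq']
    by_cases h : a ∈ B <;> by_cases h' : b ∈ B <;> simp [h, h']

theorem aux_cross_pos (G : SimpleGraph V) [DecidableRel G.Adj] (hG : G.Connected)
    (B : Finset V) (hB : B.Nonempty) (hB' : B ≠ Finset.univ) : 0 < crossCount G B := by
  obtain ⟨u, hu⟩ := hB
  obtain ⟨v, hv⟩ : ∃ v, v ∉ B := by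
    by_contra! h
    exact hB' (Finset.eq_univ_iff_forall.2 h)
  obtain ⟨p⟩ := hG.preconnected u v
  obtain ⟨x, _, hx1, hx2⟩ := p.exists_boundary_dart (B : Set V) (by simpa using hu) (by simpa using hv)
  unfold crossCount
  apply Finset.card_pos.2
  refine ⟨s(x.fst, x.snd), ?_⟩
  have := x.adj
  simp_all

theorem aux_arith (n δ D p dB W S k : ℚ) (hp : 1 ≤ p) (hD : p ≤ D)
    (hW : W = 2 * S - 2 * k + (2 * n + δ))
    (h : |dB - (D / (2 * p)) * W| ≤ δ / 2) :
    |k - S + dB / D * p - n - δ / 2| ≤ (p / D) * (δ / 2) := by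
  have hD0 : 0 < D := by linarith
  have hp0 : 0 < p := by linarith
  have e : k - S + dB / D * p - n - δ / 2 = (p / D) * (dB - (D / (2 * p)) * W) := by
    subst hW
    field_simp
    ring
  rw [e, abs_mul, abs_of_pos (div_pos hp0 hD0)]
  exact mul_le_mul_of_nonneg_left h (div_pos hp0 hD0).le

/-- if `L` has multidegree `d` with `d v ≥ 1`, total degree
`Dtot ≥ p_a − 1 ≥ 1`, and satisfies the balanced inequality for every nonempty proper
`B`, then the induced polarization `w v = d v / Dtot` satisfies `0 ≤ Δ_w(O_B) ≤ δ_B`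
for every nonempty proper `B`, with strict inequalities when `Dtot > p_a − 1`. -/
theorem stmt_19 (G : SimpleGraph V) [DecidableRel G.Adj]
    (hG : G.Connected) (hγ : 2 ≤ Fintype.card V)
    (g : V → ℕ) (pa : ℚ)
    (hpa : pa = (∑ v, (g v : ℚ)) + (G.edgeFinset.card : ℚ) - (Fintype.card V : ℚ) + 1)
    (hpa2 : 2 ≤ pa)
    (d : V → ℤ) (hd : ∀ v, 1 ≤ d v)
    (Dtot : ℚ) (hDtot : Dtot = ∑ v, (d v : ℚ)) (hDge : pa - 1 ≤ Dtot)
    (w : V → ℚ) (hw : ∀ v, w v = (d v : ℚ) / Dtot)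
    (lam : V → ℚ) (hlam : ∀ v, lam v = 1 - (g v : ℚ) - w v * (1 - pa))
    (hbal : ∀ B : Finset V, B.Nonempty → B ≠ Finset.univ →
      |(∑ v ∈ B, (d v : ℚ))
          - (Dtot / (2 * pa - 2)) * (∑ v ∈ B, (2 * (g v : ℚ) - 2 + (G.degree v : ℚ)))|
        ≤ (crossCount G B : ℚ) / 2) :
    (∀ B : Finset V, B.Nonempty → B ≠ Finset.univ →
        0 ≤ DeltaO G lam B ∧ DeltaO G lam B ≤ (crossCount G B : ℚ))
    ∧ (pa - 1 < Dtot → ∀ B : Finset V, B.Nonempty → B ≠ Finset.univ →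
        0 < DeltaO G lam B ∧ DeltaO G lam B < (crossCount G B : ℚ)) := by
  have key : ∀ B : Finset V, B.Nonempty → B ≠ Finset.univ →
      |DeltaO G lam B - (crossCount G B : ℚ) / 2|
        ≤ ((pa - 1) / Dtot) * ((crossCount G B : ℚ) / 2) := by
    intro B hB hB'
    have hs : (∑ v ∈ B, (G.degree v : ℚ)) = 2 * insideCount G B + crossCount G B := by
      exact_mod_cast aux_handshake G B
    have hb := hbal B hB hB'
    have e2 : 2 * pa - 2 = 2 * (pa - 1) := by ring
    rw [e2] at hb
    have := aux_arith (insideCount G B) (crossCount G B) Dtot (pa - 1) (∑ v ∈ B, (d v : ℚ)) _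
      (∑ v ∈ B, (g v : ℚ)) B.card (by linarith) hDge ?_ hb
    · have e : DeltaO G lam B = B.card - (∑ v ∈ B, (g v : ℚ))
          + (∑ v ∈ B, (d v : ℚ)) / Dtot * (pa - 1) - insideCount G B := by
        unfold DeltaO
        simp_rw [hlam, hw]
        rw [Finset.sum_sub_distrib, Finset.sum_sub_distrib, ← Finset.sum_mul, ← Finset.sum_div]
        simp
        ring
      rw [e]
      exact this
    · rw [Finset.sum_add_distrib, Finset.sum_sub_distrib, ← Finset.mul_sum, hs]
      simp
      ring
  have hD0 : 0 < Dtot := by linarith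
  constructor
  · intro B hB hB'
    have h := abs_le.1 (key B hB hB')
    have hr : (pa - 1) / Dtot ≤ 1 := (div_le_one hD0).2 hDge
    have hc : (0 : ℚ) ≤ (crossCount G B : ℚ) / 2 := by positivity
    have := mul_le_mul_of_nonneg_right hr hc
    constructor <;> linarith [h.1, h.2]
  · intro hlt B hB hB'
    have h := abs_le.1 (key B hB hB')
    have hr : (pa - 1) / Dtot < 1 := (div_lt_one hD0).2 hlt
    have hpos : (0 : ℚ) < (crossCount G B : ℚ) := by
      exact_mod_cast aux_cross_pos G hG B hB hB'
    have := mul_lt_mul_of_pos_right hr (half_pos hpos)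
    constructor <;> linarith [h.1, h.2]
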